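/- Let D be a weakly connected directed graph. Then h*_{Q̃_D} = h*_{Q̃_{D−e}} if and only if e is a loop, a bridge, or there is another edge of D parallel to e (same tail and head). -/

import Mathlib

open Finset Pointwise

noncomputable section

variable {V E ι : Type*}

/-- The vector `x_f ∈ ℝ^V` of an edge `f` with tail `t f` and head `h f`:
`+1` at the head, `-1` at the tail, `0` elsewhere (so `0` for a loop). -/
def xvec [DecidableEq V] (t h : E → V) (f : E) : V → ℝ :=
  fun v => (if v = h f then 1 else 0) - (if v = t f then 1 else 0)

/-- The extended root polytope of the subgraph with edge set `S`:
`conv({0} ∪ {x_f : f ∈ S})`. -/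
def rootPolyOn [DecidableEq V] (t h : E → V) (S : Set E) : Set (V → ℝ) :=
  convexHull ℝ ({0} ∪ (xvec t h '' S))

/-- The underlying (simple) undirected graph of the edges in `S`. -/
def underlyingOn (t h : E → V) (S : Set E) : SimpleGraph V :=
  SimpleGraph.fromRel (fun u v => ∃ f ∈ S, t f = u ∧ h f = v)

/-- A spanning tree: a set of edges whose underlying graph is connected and which
has `|V| - 1` edges. -/
def IsSpanningTree [Fintype V] (t h : E → V) (T : Finset E) : Prop :=
  (underlyingOn t h ↑T).Connected ∧ T.card + 1 = Fintype.card V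

/-- The number of lattice points of the `k`-th dilate of `Q`. -/
def latCount [Fintype ι] (Q : Set (ι → ℝ)) (k : ℕ) : ℕ :=
  Nat.card {p : ι → ℤ // (fun i => (p i : ℝ)) ∈ (k : ℝ) • Q}

/-- The Ehrhart series of `Q` as a formal power series. -/
def ehrSeries [Fintype ι] (Q : Set (ι → ℝ)) : PowerSeries ℤ :=
  PowerSeries.mk fun k => (latCount Q k : ℤ)

/-- The dimension of a polytope: the rank of its vector span. -/
def pdim (Q : Set (ι → ℝ)) : ℕ := Module.finrank ℝ ↥(vectorSpan ℝ Q)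

/-- `p` is the `h^*`-polynomial of `Q`: `(1-t)^{dim Q + 1} · Ehr_Q(t) = p(t)`. -/
def IsHStar [Fintype ι] (Q : Set (ι → ℝ)) (p : Polynomial ℤ) : Prop :=
  (1 - PowerSeries.X) ^ (pdim Q + 1) * ehrSeries Q = PowerSeries.mk fun i => p.coeff i

/-- The `±1` vector of a signed cycle with positive arc `Cp` and negative arc `Cm`. -/
def chiVec [DecidableEq E] (Cp Cm : Finset E) : E → ℝ :=
  fun f => (if f ∈ Cp then 1 else 0) - (if f ∈ Cm then 1 else 0)

/-- A circulation: an assignment of reals to edges with zero net flow at each vertex. -/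
def IsCirculation [Fintype E] [DecidableEq V] (t h : E → V) (φ : E → ℝ) : Prop :=
  ∑ f, φ f • xvec t h f = 0

/-- `(Cp, Cm)` is a signed cycle: the arcs are disjoint, the union is nonempty, the
`±1` vector is a circulation, and the support `Cp ∪ Cm` is minimal among supports of
nonzero circulations (i.e. it is a circuit of the graphic oriented matroid). -/
def IsSignedCycle [Fintype E] [DecidableEq E] [DecidableEq V] (t h : E → V)
    (Cp Cm : Finset E) : Prop :=
  Disjoint Cp Cm ∧ (Cp ∪ Cm).Nonempty ∧ IsCirculation t h (chiVec Cp Cm) ∧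
    ∀ φ : E → ℝ, IsCirculation t h φ → φ ≠ 0 →
      (∀ f, φ f ≠ 0 → f ∈ Cp ∪ Cm) → ∀ f ∈ Cp ∪ Cm, φ f ≠ 0

/-- A circuit signature: a choice, for each cycle, of exactly one of its two
orientations. -/
def IsCircuitSignature [Fintype E] [DecidableEq E] [DecidableEq V] (t h : E → V)
    (σ : Set (Finset E × Finset E)) : Prop :=
  (∀ q ∈ σ, IsSignedCycle t h q.1 q.2) ∧
    ∀ Cp Cm : Finset E, IsSignedCycle t h Cp Cm → ((Cp, Cm) ∈ σ ↔ (Cm, Cp) ∉ σ)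

/-- Acyclicity of a circuit signature: no nontrivial nonnegative combination of the
vectors of the chosen signed cycles vanishes. -/
def IsAcyclicSig [DecidableEq E] (σ : Set (Finset E × Finset E)) : Prop :=
  ∀ (s : Finset (Finset E × Finset E)) (a : Finset E × Finset E → ℝ),
    ↑s ⊆ σ → (∀ q, 0 ≤ a q) → (∃ q ∈ s, a q ≠ 0) →
      ∑ q ∈ s, a q • chiVec q.1 q.2 ≠ 0

/-- A weight function is generic if the two arcs of every cycle have different
total weights. -/
def GenericWeight [Fintype E] [DecidableEq E] [DecidableEq V] (t h : E → V)
    (w : E → ℝ) : Prop :=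
  ∀ Cp Cm : Finset E, IsSignedCycle t h Cp Cm → ∑ f ∈ Cp, w f ≠ ∑ f ∈ Cm, w f

/-- The circuit signature `cir^w`: orient each cycle so that the positive arc has
the larger total `w`-weight. -/
def cirw [Fintype E] [DecidableEq E] [DecidableEq V] (t h : E → V) (w : E → ℝ) :
    Set (Finset E × Finset E) :=
  {q | IsSignedCycle t h q.1 q.2 ∧ ∑ f ∈ q.2, w f < ∑ f ∈ q.1, w f}

/-- `tree(D,σ)`: spanning trees `T` such that every non-tree edge `f` lies in the
positive arc of the (σ-oriented) fundamental cycle of `f`, i.e. of the unique cycle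
contained in `T ∪ {f}`. -/
def treeSet [Fintype V] [Fintype E] [DecidableEq V] [DecidableEq E] (t h : E → V)
    (σ : Set (Finset E × Finset E)) : Set (Finset E) :=
  {T | IsSpanningTree t h T ∧
    ∀ f ∉ T, ∀ Cp Cm : Finset E, (Cp, Cm) ∈ σ → Cp ∪ Cm ⊆ insert f T → f ∈ Cp}

/-- `F` is a face of `Q`: the locus where some linear functional bounded above on `Q`
attains its maximum. -/
def IsFaceOf (Q F : Set (ι → ℝ)) : Prop :=
  ∃ (l : (ι → ℝ) →ₗ[ℝ] ℝ) (c : ℝ), (∀ y ∈ Q, l y ≤ c) ∧ F = {y ∈ Q | l y = c}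

/-- `F` is a facet of `Q`: a face of codimension one. -/
def IsFacetOf (Q F : Set (ι → ℝ)) : Prop :=
  IsFaceOf Q F ∧ pdim F + 1 = pdim Q

end

/-!
Every dilate of `Q̃_D` has the integer decomposition property: by Carathéodory and a fundamental
cut, a lattice point of `k Q̃_D` is a sum of `k` vectors among `0` and the `x_f`. So the Ehrhart
series is the Hilbert series of the graded monoid generated in degree one by these vectors. Passing
to lexicographically smallest exponent vectors turns it into the Hilbert series of a lower set of
`ℕ^ι`, which is a polynomial over `(1 - X)^d`; hence `h*` exists.

If `x_e` is not in the span of the other edge vectors (`e` is a bridge), a cut separates the ends of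
`e`, and splitting off copies of `x_e` gives `Ehr_D = Ehr_{D-e} + X Ehr_D`; the factor `1 - X` is
exactly compensated by the dimension. Otherwise the dimensions agree, so the `h*`-polynomials agree
iff the Ehrhart series do. The coefficient of `X` counts the points `0` and `x_f`, so it
drops under deletion of `e` unless `x_e = 0` or `x_e = x_f` for some `f ≠ e`.
-/

/-- The Hilbert series `∑ₖ #{x ∈ T | deg x = k} Xᵏ` of a graded set `T`. An infinite graded piece
contributes the junk coefficient `0`. -/
noncomputable def hilbertSeries {α : Type*} (deg : α → ℕ) (T : Set α) : PowerSeries ℤ :=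
  .mk fun k => ((T ∩ deg ⁻¹' {k}).ncard : ℤ)

section HilbertSeries

variable {α β : Type*} {deg : α → ℕ} {deg' : β → ℕ}

theorem hilbertSeries_empty : hilbertSeries deg ∅ = 0 := by
  ext k
  simp [hilbertSeries]

theorem hilbertSeries_singleton (x : α) : hilbertSeries deg {x} = PowerSeries.X ^ deg x := by
  ext k
  by_cases hk : k = deg x
  · simp [hilbertSeries, PowerSeries.coeff_X_pow, hk]
  · simp [hilbertSeries, PowerSeries.coeff_X_pow, hk, Set.singleton_inter_eq_empty.2,
      Ne.symm hk]

theorem hilbertSeries_union {S T : Set α} (hST : Disjoint S T)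
    (hS : ∀ k, (S ∩ deg ⁻¹' {k}).Finite) (hT : ∀ k, (T ∩ deg ⁻¹' {k}).Finite) :
    hilbertSeries deg (S ∪ T) = hilbertSeries deg S + hilbertSeries deg T := by
  ext k
  simp only [hilbertSeries, PowerSeries.coeff_mk, map_add, Set.union_inter_distrib_right]
  rw [Set.ncard_union_eq (hST.mono Set.inter_subset_left Set.inter_subset_left) (hS k) (hT k)]
  exact Nat.cast_add _ _

theorem hilbertSeries_image {φ : α → β} {T : Set α} (hφ : T.InjOn φ)
    (hdeg : ∀ x ∈ T, deg' (φ x) = deg x) :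
    hilbertSeries deg' (φ '' T) = hilbertSeries deg T := by
  ext k
  have hpiece : φ '' T ∩ deg' ⁻¹' {k} = φ '' (T ∩ deg ⁻¹' {k}) := by
    ext y
    constructor
    · rintro ⟨⟨x, hx, rfl⟩, hk⟩
      exact ⟨x, ⟨hx, (hdeg x hx).symm.trans hk⟩, rfl⟩
    · rintro ⟨x, ⟨hx, hk⟩, rfl⟩
      exact ⟨⟨x, hx, rfl⟩, (hdeg x hx).trans hk⟩
  simp only [hilbertSeries, PowerSeries.coeff_mk, hpiece,
    (hφ.mono Set.inter_subset_left).ncard_image]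

theorem hilbertSeries_deg_add_one (T : Set α) :
    hilbertSeries (deg · + 1) T = PowerSeries.X * hilbertSeries deg T := by
  ext (_ | k)
  · simp [hilbertSeries, Set.preimage, Set.inter_def]
  · simp [hilbertSeries, PowerSeries.coeff_succ_X_mul, Set.preimage]

theorem hilbertSeries_image_succ {φ : α → β} {T : Set α} (hφ : T.InjOn φ)
    (hdeg : ∀ x ∈ T, deg' (φ x) = deg x + 1) :
    hilbertSeries deg' (φ '' T) = PowerSeries.X * hilbertSeries deg T := by
  rw [← hilbertSeries_deg_add_one, hilbertSeries_image hφ hdeg]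

end HilbertSeries

section LowerSets

-- Elements `aₙ ∈ Lₙ \ Lₙ₊₁` of a strictly descending chain satisfy `aᵢ ≤ aⱼ` for some `i < j`.
theorem wellFoundedLT_lowerSet {α : Type*} [Preorder α] [WellQuasiOrderedLE α] :
    WellFoundedLT (LowerSet α) := by
  refine ⟨wellFounded_iff_isEmpty_descending_chain.2 ⟨fun ⟨L, hL⟩ => ?_⟩⟩
  choose a ha_mem ha_notMem using fun n => Set.exists_of_ssubset (hL n)
  obtain ⟨i, j, hij, haij⟩ := wellQuasiOrdered_le a
  have hanti : Antitone L := antitone_nat_of_succ_le fun n => (hL n).le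
  exact ha_notMem i ((L (i + 1)).lower haij (hanti hij (ha_mem j)))

variable {ι : Type*}

/-- The coordinate face `ℕ^F` of `ℕ^ι`: the exponent vectors supported on `F`. -/
def coordFace (F : Finset ι) : Set (ι → ℕ) := {m | ∀ i ∉ F, m i = 0}

section DecidableEq

variable [DecidableEq ι]

theorem sub_single_add_single {m : ι → ℕ} {i : ι} (hi : m i ≠ 0) :
    m - Pi.single i 1 + Pi.single i 1 = m := by
  refine tsub_add_cancel_of_le fun j => ?_
  rcases eq_or_ne j i with rfl | hj
  · simpa [Nat.one_le_iff_ne_zero] using hi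
  · simp [hj]

theorem coordFace_insert_inter (F : Finset ι) {i : ι} (hi : i ∉ F) :
    coordFace (insert i F) ∩ {m | m i = 0} = coordFace F := by
  ext m
  refine ⟨fun ⟨hm, hmi⟩ j hj => ?_, fun hm => ⟨fun j hj => hm j (by simp_all), hm i hi⟩⟩
  rcases eq_or_ne j i with rfl | hji
  · exact hmi
  · exact hm j (by simp [hj, hji])

theorem preimage_add_single_coordFace {F : Finset ι} {i : ι} (hi : i ∈ F) :
    (· + Pi.single i 1) ⁻¹' coordFace F = coordFace F := by
  ext m
  refine forall₂_congr fun j hj => ?_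
  simp [show j ≠ i by grind]

theorem eq_coordFace_of_isLowerSet [Finite ι] {M : Set (ι → ℕ)} (hM : IsLowerSet M)
    (hne : M.Nonempty) {F : Finset ι} (hF : ∀ i ∈ F, (· + Pi.single i 1) ⁻¹' M = M)
    (hF' : ∀ i ∉ F, M ∩ {m | m i = 0} = M) : M = coordFace F := by
  refine Set.Subset.antisymm (fun m hm i hi => Set.inter_eq_left.1 (hF' i hi) hm) fun m hm => ?_
  induction m using WellFoundedLT.induction with | ind m ih => ?_
  rcases eq_or_ne m 0 with rfl | hm0
  · exact hne.elim fun m' hm' => hM zero_le hm'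
  · obtain ⟨i, hi⟩ := Function.ne_iff.1 hm0
    have hiF : i ∈ F := by_contra fun h => hi (hm i h)
    rw [← sub_single_add_single hi]
    refine (hF i hiF).superset (ih _ ?_ fun j hj => ?_)
    · exact (lt_add_of_pos_right _ (by simp)).trans_eq (sub_single_add_single hi)
    · simp [hm j hj]

theorem eq_empty_or_exists_eq_coordFace [Finite ι] {M : Set (ι → ℕ)} (hM : IsLowerSet M)
    (hsplit : ∀ i, (· + Pi.single i 1) ⁻¹' M ≠ M → M ∩ {m | m i = 0} = M) :
    M = ∅ ∨ ∃ F : Finset ι, M = coordFace F := by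
  refine M.eq_empty_or_nonempty.imp_right fun hne => ?_
  let F : Set ι := {i | (· + Pi.single i 1) ⁻¹' M = M}
  refine ⟨F.toFinite.toFinset, eq_coordFace_of_isLowerSet hM hne (fun i hi => ?_) fun i hi => ?_⟩
  · exact F.toFinite.mem_toFinset.1 hi
  · exact hsplit i fun h => hi (F.toFinite.mem_toFinset.2 h)

end DecidableEq

variable [Fintype ι]

/-- The total degree of an exponent vector `m : ι → ℕ`. -/
def totalDeg (m : ι → ℕ) : ℕ := ∑ i, m i

theorem finite_inter_totalDeg_preimage (M : Set (ι → ℕ)) (k : ℕ) :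
    (M ∩ totalDeg ⁻¹' {k}).Finite := by
  classical
  exact (Set.finite_Iic fun _ => k).subset fun m hm i =>
    (single_le_sum_of_canonicallyOrdered (mem_univ i)).trans_eq hm.2

theorem hilbertSeries_eq_add_X_mul [DecidableEq ι] (M : Set (ι → ℕ)) (i : ι) :
    hilbertSeries totalDeg M = hilbertSeries totalDeg (M ∩ {m | m i = 0}) +
      PowerSeries.X * hilbertSeries totalDeg ((· + Pi.single i 1) ⁻¹' M) := by
  have hrange : Set.range (fun m : ι → ℕ => m + Pi.single i 1) = {m | m i = 0}ᶜ := by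
    ext m
    exact ⟨by rintro ⟨m, rfl⟩; simp, fun hm => ⟨_, sub_single_add_single hm⟩⟩
  have himage : hilbertSeries totalDeg (M ∩ {m | m i = 0}ᶜ) =
      PowerSeries.X * hilbertSeries totalDeg ((· + Pi.single i 1) ⁻¹' M) := by
    rw [← hrange, ← Set.image_preimage_eq_inter_range]
    exact hilbertSeries_image_succ (add_left_injective _).injOn fun m _ => by
      simp [totalDeg, sum_add_distrib]
  have hdisj : Disjoint (M ∩ {m | m i = 0}) (M ∩ {m | m i = 0}ᶜ) :=
    disjoint_compl_right.mono Set.inter_subset_right Set.inter_subset_right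
  rw [← himage, ← hilbertSeries_union hdisj (finite_inter_totalDeg_preimage _)
    (finite_inter_totalDeg_preimage _), Set.inter_union_compl]

theorem one_sub_X_pow_mul_hilbertSeries_coordFace (F : Finset ι) :
    (1 - PowerSeries.X) ^ #F * hilbertSeries totalDeg (coordFace F) = 1 := by
  classical
  induction F using Finset.induction_on with
  | empty =>
    have hzero : coordFace (∅ : Finset ι) = {0} := by
      ext m
      simp [coordFace, funext_iff]
    simp [hzero, hilbertSeries_singleton, totalDeg]
  | insert i F hi ih =>
    have hrec := hilbertSeries_eq_add_X_mul (coordFace (insert i F)) i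
    rw [coordFace_insert_inter F hi, preimage_add_single_coordFace (mem_insert_self i F)] at hrec
    rw [card_insert_of_notMem hi]
    linear_combination ih + (1 - PowerSeries.X) ^ #F * hrec

theorem exists_polynomial_eq_hilbertSeries_lowerSet (L : LowerSet (ι → ℕ)) {d : ℕ}
    (hd : ∀ F : Finset ι, coordFace F ⊆ (L : Set (ι → ℕ)) → #F ≤ d) :
    ∃ p : Polynomial ℤ,
      (p : PowerSeries ℤ) = (1 - PowerSeries.X) ^ d * hilbertSeries totalDeg (L : Set (ι → ℕ)) := by
  classical
  have := wellFoundedLT_lowerSet (α := ι → ℕ)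
  induction L using WellFoundedLT.induction with | ind L ih => ?_
  obtain ⟨M, hM⟩ := L
  rw [LowerSet.coe_mk] at hd ⊢
  by_cases hsplit : ∃ i, (· + Pi.single i 1) ⁻¹' M ≠ M ∧ M ∩ {m | m i = 0} ≠ M
  · obtain ⟨i, hcolon, hslice⟩ := hsplit
    have hslice_lower : IsLowerSet (M ∩ {m | m i = 0}) :=
      hM.inter fun m m' hle hm => le_antisymm ((hle i).trans hm.le) zero_le
    have hcolon_lower : IsLowerSet ((· + Pi.single i 1) ⁻¹' M) :=
      fun m m' hle hm => hM (add_le_add_left hle _) hm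
    have hslice_lt : M ∩ {m | m i = 0} < M := Set.inter_subset_left.lt_of_ne hslice
    have hcolon_lt : (· + Pi.single i 1) ⁻¹' M < M :=
      lt_of_le_of_ne (fun m hm => hM le_self_add hm) hcolon
    obtain ⟨p, hp⟩ := ih ⟨_, hslice_lower⟩ hslice_lt fun F hF => hd F (hF.trans hslice_lt.le)
    obtain ⟨q, hq⟩ := ih ⟨_, hcolon_lower⟩ hcolon_lt fun F hF => hd F (hF.trans hcolon_lt.le)
    rw [LowerSet.coe_mk] at hp hq
    refine ⟨p + Polynomial.X * q, ?_⟩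
    rw [hilbertSeries_eq_add_X_mul M i, Polynomial.coe_add, Polynomial.coe_mul, Polynomial.coe_X,
      hp, hq]
    ring
  · push Not at hsplit
    obtain rfl | ⟨F, rfl⟩ := eq_empty_or_exists_eq_coordFace hM hsplit
    · exact ⟨0, by simp [hilbertSeries_empty]⟩
    · refine ⟨(1 - Polynomial.X) ^ (d - #F), ?_⟩
      rw [← Nat.sub_add_cancel (hd F Set.Subset.rfl), pow_add, mul_assoc,
        one_sub_X_pow_mul_hilbertSeries_coordFace]
      simp

end LowerSets

section StandardMonomials

variable {ι M : Type*} [AddCommMonoid M] [LinearOrder ι]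

/-- The exponents of the standard monomials of the toric ideal of `φ : ℕ^ι → M`: the
lexicographically smallest elements of the fibres of `φ`. -/
def stdExponents (φ : (ι → ℕ) →+ M) : Set (ι → ℕ) :=
  {m | ∀ m', φ m' = φ m → toLex m ≤ toLex m'}

theorem injOn_stdExponents (φ : (ι → ℕ) →+ M) : (stdExponents φ).InjOn φ :=
  fun _ hm₁ _ hm₂ heq => toLex_inj.1 (le_antisymm (hm₁ _ heq.symm) (hm₂ _ heq))

theorem isLowerSet_stdExponents [Finite ι] (φ : (ι → ℕ) →+ M) : IsLowerSet (stdExponents φ) := by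
  intro m₁ m₂ hle hm₁ m' hm'
  obtain ⟨c, rfl⟩ := exists_add_of_le hle
  exact le_of_add_le_add_right (hm₁ (m' + c) (by rw [map_add, map_add, hm']))

theorem image_stdExponents [Finite ι] (φ : (ι → ℕ) →+ M) : φ '' stdExponents φ = Set.range φ := by
  refine (Set.image_subset_range _ _).antisymm ?_
  rintro _ ⟨m, rfl⟩
  obtain ⟨l, hl, hmin⟩ := WellFounded.has_min wellFounded_lt
    {l : Lex (ι → ℕ) | φ (ofLex l) = φ m} ⟨toLex m, rfl⟩
  exact ⟨ofLex l, fun m' hm' => not_lt.1 (hmin (toLex m') (hm'.trans hl)), hl⟩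

theorem linearIndepOn_of_coordFace_subset_stdExponents [Fintype ι] {v : ι → M} {F : Finset ι}
    (hF : coordFace F ⊆ stdExponents (Fintype.linearCombination ℕ v).toAddMonoidHom) :
    LinearIndepOn ℕ v F := by
  refine linearIndepOn_finset_iffₛ.2 fun f g hfg i hi => ?_
  have hmem (f : ι → ℕ) : F.piecewise f 0 ∈ coordFace F := fun i hi => by simp [hi]
  have hsum (f : ι → ℕ) : Fintype.linearCombination ℕ v (F.piecewise f 0) = ∑ i ∈ F, f i • v i := by
    simp [Fintype.linearCombination_apply, piecewise, ite_smul]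
  have heq := injOn_stdExponents _ (hF (hmem f)) (hF (hmem g))
    ((hsum f).trans (hfg.trans (hsum g).symm))
  simpa [hi] using congrFun heq i

end StandardMonomials

section GradedMonoids

theorem coe_closure_range_eq_range_linearCombination {ι M : Type*} [AddCommMonoid M] [Fintype ι]
    (v : ι → M) :
    (AddSubmonoid.closure (Set.range v) : Set M) = Set.range (Fintype.linearCombination ℕ v) := by
  rw [← Submodule.span_nat_eq_addSubmonoidClosure, ← LinearMap.coe_range,
    Fintype.range_linearCombination]
  rfl

theorem apply_linearCombination_eq_totalDeg {ι M : Type*} [AddCommMonoid M] [Fintype ι]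
    (deg : M →+ ℕ) {v : ι → M} (hv : ∀ i, deg (v i) = 1) (m : ι → ℕ) :
    deg (Fintype.linearCombination ℕ v m) = totalDeg m := by
  simp [totalDeg, Fintype.linearCombination_apply, hv]

variable {ι M : Type*} [AddCommMonoid M] [Finite ι] (deg : M →+ ℕ) {v : ι → M}

theorem finite_closure_range_inter_preimage (hv : ∀ i, deg (v i) = 1) (k : ℕ) :
    ((AddSubmonoid.closure (Set.range v) : Set M) ∩ deg ⁻¹' {k}).Finite := by
  have := Fintype.ofFinite ι
  refine ((finite_inter_totalDeg_preimage Set.univ k).image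
    (Fintype.linearCombination ℕ v)).subset ?_
  rw [coe_closure_range_eq_range_linearCombination]
  rintro _ ⟨⟨m, rfl⟩, hm⟩
  exact ⟨m, ⟨trivial, (apply_linearCombination_eq_totalDeg deg hv m).symm.trans hm⟩, rfl⟩

theorem exists_polynomial_eq_hilbertSeries_closure (hv : ∀ i, deg (v i) = 1) {d : ℕ}
    (hd : ∀ F : Finset ι, LinearIndepOn ℕ v F → #F ≤ d) :
    ∃ p : Polynomial ℤ, (p : PowerSeries ℤ) = (1 - PowerSeries.X) ^ d *
      hilbertSeries deg (AddSubmonoid.closure (Set.range v) : Set M) := by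
  classical
  have := Fintype.ofFinite ι
  let : LinearOrder ι := LinearOrder.lift' _ (Fintype.equivFin ι).injective
  let φ := (Fintype.linearCombination ℕ v).toAddMonoidHom
  have himage : φ '' stdExponents φ = (AddSubmonoid.closure (Set.range v) : Set M) := by
    rw [image_stdExponents, coe_closure_range_eq_range_linearCombination]
    rfl
  rw [← himage, hilbertSeries_image (injOn_stdExponents φ) fun m _ =>
    apply_linearCombination_eq_totalDeg deg hv m]
  exact exists_polynomial_eq_hilbertSeries_lowerSet ⟨_, isLowerSet_stdExponents φ⟩ fun F hF =>
    hd F (linearIndepOn_of_coordFace_subset_stdExponents hF)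

end GradedMonoids

section Dimension

theorem affineIndependent_int_of_linearIndependent_nat {ι M : Type*} [AddCommGroup M] {y : ι → M}
    (hy : LinearIndependent ℕ fun i => ((1 : ℕ), y i)) : AffineIndependent ℤ y := by
  refine affineIndependent_iff.2 fun s w hw hwy i hi => ?_
  have hsplit (j : ι) : ((w j).toNat : ℤ) - ((-w j).toNat : ℤ) = w j := by lia
  have heq : ∑ j ∈ s, (w j).toNat • ((1 : ℕ), y j) = ∑ j ∈ s, (-w j).toNat • ((1 : ℕ), y j) := by
    refine Prod.ext ?_ ?_
    · simp only [Prod.fst_sum, Prod.smul_fst, smul_eq_mul, mul_one]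
      zify
      rw [← sub_eq_zero, ← sum_sub_distrib]
      simpa only [hsplit] using hw
    · simp only [Prod.snd_sum, Prod.smul_snd]
      rw [← sub_eq_zero, ← sum_sub_distrib, ← hwy]
      refine sum_congr rfl fun j _ => ?_
      nth_rw 3 [← hsplit j]
      rw [sub_smul, natCast_zsmul, natCast_zsmul]
  have := linearIndependent_iff'ₛ.1 hy s _ _ heq i hi
  lia

theorem affineIndependent_intCast {ι V : Type*} [Finite V] {y : ι → V → ℤ}
    (hy : AffineIndependent ℤ y) : AffineIndependent ℝ fun i v => (y i v : ℝ) := by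
  cases isEmpty_or_nonempty ι
  · exact affineIndependent_of_subsingleton ℝ _
  inhabit ι
  rw [affineIndependent_iff_linearIndependent_vsub _ _ default] at hy ⊢
  have hcast (i : ι) : (fun v => (y i v : ℝ)) -ᵥ (fun v => (y default v : ℝ)) =
      algebraMap ℤ ℝ ∘ (y i -ᵥ y default) := by
    ext v
    simp
  simp only [hcast]
  exact linearIndependent_algebraMap_comp_iff.2 hy

theorem card_le_pdim_add_one {ι V : Type*} [Fintype ι] [Finite V] {y : ι → V → ℤ}
    (hy : LinearIndependent ℕ fun i => ((1 : ℕ), y i)) {Q : Set (V → ℝ)}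
    (hQ : ∀ i, (fun v => (y i v : ℝ)) ∈ Q) : Fintype.card ι ≤ pdim Q + 1 :=
  have haff := affineIndependent_intCast (affineIndependent_int_of_linearIndependent_nat hy)
  haff.card_le_finrank_succ.trans
    (Nat.succ_le_succ (Submodule.finrank_mono (vectorSpan_mono ℝ (Set.range_subset_iff.2 hQ))))

end Dimension

section EdgeVectors

variable {V E : Type*} {t h : E → V} {S : Set E} {u v : V}

theorem underlyingOn_adj :
    (underlyingOn t h S).Adj u v ↔
      u ≠ v ∧ ∃ f ∈ S, t f = u ∧ h f = v ∨ t f = v ∧ h f = u := by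
  simp only [underlyingOn, SimpleGraph.fromRel_adj, and_or_left, exists_or]

theorem exists_cut_of_not_reachable [Finite V] (huv : ¬(underlyingOn t h S).Reachable u v) :
    ∃ C : Finset V, u ∉ C ∧ v ∈ C ∧ ∀ f ∈ S, (t f ∈ C ↔ h f ∈ C) := by
  let C : Set V := {w | (underlyingOn t h S).Reachable v w}
  refine ⟨C.toFinite.toFinset, ?_, ?_, fun f hf => ?_⟩
  · simpa [C] using fun hvu => huv hvu.symm
  · simp [C]
  · have hreach : (underlyingOn t h S).Reachable (t f) (h f) := by
      by_cases hloop : t f = h f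
      · rw [hloop]
      · exact (underlyingOn_adj.2 ⟨hloop, f, hf, .inl ⟨rfl, rfl⟩⟩).reachable
    simpa [C] using ⟨fun hvt => hvt.trans hreach, fun hvh => hvh.trans hreach.symm⟩

/-- The total coordinate of a vector on the vertex set `C`. On `edgeVec R u v` it detects whether
the edge `u → v` crosses the cut `(C, Cᶜ)`. -/
def cutForm (R : Type*) [CommRing R] (C : Finset V) : (V → R) →ₗ[R] R := ∑ w ∈ C, LinearMap.proj w

theorem cutForm_intCast (C : Finset V) (p : V → ℤ) :
    cutForm ℝ C (fun v => (p v : ℝ)) = (cutForm ℤ C p : ℤ) := by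
  simp [cutForm]

variable [DecidableEq V]

/-- The vector of an edge `u → v` with coordinates in `R`: `+1` at `v`, `-1` at `u`, and `0` when
`u = v`. It is `xvec` for `R = ℝ` and the corresponding lattice point for `R = ℤ`. -/
def edgeVec (R : Type*) [Ring R] (u v : V) : V → R := Pi.single v 1 - Pi.single u 1

theorem edgeVec_eq_xvec (t h : E → V) (f : E) : edgeVec ℝ (t f) (h f) = xvec t h f := by
  ext w
  simp [edgeVec, xvec, Pi.single_apply]

theorem intCast_edgeVec (u v : V) : (fun w => (edgeVec ℤ u v w : ℝ)) = edgeVec ℝ u v := by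
  ext w
  simp [edgeVec, Pi.single_apply]

theorem edgeVec_eq_zero_iff {R : Type*} [Ring R] [Nontrivial R] :
    edgeVec R u v = 0 ↔ u = v := by
  refine ⟨fun huv => ?_, fun huv => by rw [edgeVec, huv, sub_self]⟩
  by_contra hne
  simpa [edgeVec, hne] using congrFun huv u

theorem edgeVec_eq_edgeVec_iff {R : Type*} [CommRing R] [CharZero R] {u' v' : V} (huv : u ≠ v) :
    edgeVec R u v = edgeVec R u' v' ↔ u = u' ∧ v = v' := by
  refine ⟨fun heq => ?_, fun ⟨hu, hv⟩ => hu ▸ hv ▸ rfl⟩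
  have hu := congrFun heq u
  have hv := congrFun heq v
  simp only [edgeVec, Pi.sub_apply, Pi.single_apply] at hu hv
  grind

theorem cutForm_edgeVec (R : Type*) [CommRing R] (C : Finset V) (u v : V) :
    cutForm R C (edgeVec R u v) = (if v ∈ C then 1 else 0) - if u ∈ C then 1 else 0 := by
  simp [cutForm, edgeVec]

theorem edgeVec_mem_span_of_reachable (huv : (underlyingOn t h S).Reachable u v) :
    edgeVec ℝ u v ∈ Submodule.span ℝ (xvec t h '' S) := by
  obtain ⟨p⟩ := huv
  induction p with
  | nil => simp [edgeVec]
  | @cons a b c hab _ ih =>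
    have hedge : edgeVec ℝ a b ∈ Submodule.span ℝ (xvec t h '' S) := by
      obtain ⟨_, f, hf, ⟨rfl, rfl⟩ | ⟨rfl, rfl⟩⟩ := underlyingOn_adj.1 hab
      · exact Submodule.subset_span ⟨f, hf, (edgeVec_eq_xvec t h f).symm⟩
      · rw [← neg_mem_iff, edgeVec, neg_sub]
        exact Submodule.subset_span ⟨f, hf, (edgeVec_eq_xvec t h f).symm⟩
    have hadd : edgeVec ℝ a c = edgeVec ℝ a b + edgeVec ℝ b c := by
      simp [edgeVec]
    exact hadd ▸ add_mem hedge ih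

theorem edgeVec_mem_span_iff_reachable [Finite V] :
    edgeVec ℝ u v ∈ Submodule.span ℝ (xvec t h '' S) ↔ (underlyingOn t h S).Reachable u v := by
  refine ⟨fun hmem => ?_, edgeVec_mem_span_of_reachable⟩
  by_contra huv
  obtain ⟨C, hu, hv, hC⟩ := exists_cut_of_not_reachable huv
  have hspan : Submodule.span ℝ (xvec t h '' S) ≤ (cutForm ℝ C).ker := by
    refine Submodule.span_le.2 (Set.image_subset_iff.2 fun f hf => ?_)
    simp [← edgeVec_eq_xvec, cutForm_edgeVec, hC f hf]
  simpa [cutForm_edgeVec, hu, hv] using hspan hmem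

theorem connected_iff_xvec_mem_span [Finite V] {e : E}
    (hconn : (underlyingOn t h (insert e S)).Connected) :
    (underlyingOn t h S).Connected ↔ xvec t h e ∈ Submodule.span ℝ (xvec t h '' S) := by
  rw [← edgeVec_eq_xvec]
  refine ⟨fun hS => edgeVec_mem_span_of_reachable (hS.preconnected _ _), fun he => ?_⟩
  have := hconn.nonempty
  refine ⟨fun u v => edgeVec_mem_span_iff_reachable.1 ?_⟩
  have huv := edgeVec_mem_span_of_reachable (hconn.preconnected u v)
  rwa [Set.image_insert_eq, ← edgeVec_eq_xvec, Submodule.span_insert_eq_span he] at huv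

theorem exists_int_eq_of_linearIndepOn_support [Finite V] {w : E →₀ ℝ}
    (hw : LinearIndepOn ℝ (xvec t h) w.support) {p : V → ℤ}
    (hp : Finsupp.linearCombination ℝ (xvec t h) w = fun v => (p v : ℝ)) (e : E) :
    ∃ n : ℤ, w e = n := by
  by_cases he : e ∈ w.support
  swap
  · exact ⟨0, by simpa using he⟩
  have hreach : ¬(underlyingOn t h ((w.support : Set E) \ {e})).Reachable (t e) (h e) := by
    rw [← edgeVec_mem_span_iff_reachable, edgeVec_eq_xvec]
    exact hw.notMem_span he
  obtain ⟨C, ht, hh, hC⟩ := exists_cut_of_not_reachable hreach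
  -- The fundamental cut of `e` with respect to the forest `w.support` reads off `w e`.
  refine ⟨cutForm ℤ C p, ?_⟩
  rw [← cutForm_intCast, ← hp, Finsupp.linearCombination_apply, Finsupp.sum, map_sum,
    sum_eq_single_of_mem e he]
  · simp [← edgeVec_eq_xvec, cutForm_edgeVec, ht, hh]
  · intro f hf hfe
    simp [← edgeVec_eq_xvec, cutForm_edgeVec, hC f ⟨hf, hfe⟩]

end EdgeVectors

section Caratheodory

theorem finsupp_degree_smul {ι R : Type*} [Semiring R] (r : R) (c : ι →₀ R) :
    (r • c).degree = r * c.degree := by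
  induction c using Finsupp.induction_linear with
  | zero => simp
  | add c c' hc hc' => rw [smul_add, map_add, map_add, hc, hc', mul_add]
  | single i a =>
    rw [Finsupp.smul_single, Finsupp.degree_single, Finsupp.degree_single, smul_eq_mul]

theorem exists_neg_of_degree_nonpos {ι : Type*} {c : ι →₀ ℝ} (hc : c ≠ 0) (hdeg : c.degree ≤ 0) :
    ∃ i, c i < 0 := by
  by_contra! hnonneg
  refine hc (Finsupp.ext fun i => ?_)
  by_contra hi
  exact hdeg.not_gt (sum_pos' (fun j _ => hnonneg j)
    ⟨i, Finsupp.mem_support_iff.2 hi, (hnonneg i).lt_of_ne' hi⟩)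

theorem exists_nonneg_add_smul_eq_zero {ι : Type*} {w c : ι →₀ ℝ} (hw : 0 ≤ w)
    (hc : ∃ i, c i < 0) : ∃ r : ℝ, 0 ≤ r ∧ 0 ≤ w + r • c ∧ ∃ i, c i < 0 ∧ (w + r • c) i = 0 := by
  obtain ⟨i₀, hi₀⟩ := hc
  obtain ⟨i, hi, hmin⟩ := exists_min_image {i ∈ c.support | c i < 0} (fun i => w i / -c i)
    ⟨i₀, by simp [hi₀, hi₀.ne]⟩
  have hci : c i < 0 := (mem_filter.1 hi).2
  refine ⟨w i / -c i, div_nonneg (hw i) (neg_pos.2 hci).le, fun j => ?_, i, hci, ?_⟩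
  · rcases lt_or_ge (c j) 0 with hcj | hcj
    · have := hmin j (by simp [hcj, hcj.ne])
      rw [le_div_iff₀ (neg_pos.2 hcj)] at this
      simp only [Finsupp.coe_zero, Pi.zero_apply, Finsupp.coe_add, Finsupp.coe_smul, Pi.add_apply,
        Pi.smul_apply, smul_eq_mul]
      linarith
    · exact add_nonneg (hw j) (mul_nonneg (div_nonneg (hw i) (neg_pos.2 hci).le) hcj)
  · simp [div_neg, hci.ne]

variable {ι M : Type*} [AddCommGroup M] [Module ℝ M] {x : ι → M}

theorem exists_nonneg_linearIndepOn_support {w : ι →₀ ℝ} (hw : 0 ≤ w) :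
    ∃ w' : ι →₀ ℝ, 0 ≤ w' ∧ w'.support ⊆ w.support ∧ w'.degree ≤ w.degree ∧
      Finsupp.linearCombination ℝ x w' = Finsupp.linearCombination ℝ x w ∧
      LinearIndepOn ℝ x w'.support := by
  induction hn : #w.support using Nat.strong_induction_on generalizing w with | _ n ih
  classical
  by_cases hindep : LinearIndepOn ℝ x w.support
  · exact ⟨w, hw, Subset.rfl, le_rfl, rfl, hindep⟩
  obtain ⟨c, hcsupp, hcx, hc⟩ := linearDepOn_iff'.1 hindep
  rw [Finsupp.mem_supported, coe_subset] at hcsupp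
  wlog hdeg : c.degree ≤ 0 generalizing c
  · exact this (-c) (by rwa [Finsupp.support_neg]) (by simp [hcx]) (by simpa)
      (by simp [(not_le.1 hdeg).le])
  obtain ⟨r, hr, hnonneg, i, hci, hi⟩ :=
    exists_nonneg_add_smul_eq_zero hw (exists_neg_of_degree_nonpos hc hdeg)
  have hsub : (w + r • c).support ⊆ w.support :=
    Finsupp.support_add.trans (union_subset Subset.rfl (Finsupp.support_smul.trans hcsupp))
  have hssub : (w + r • c).support ⊂ w.support := (ssubset_iff_of_subset hsub).2
    ⟨i, hcsupp (Finsupp.mem_support_iff.2 hci.ne), Finsupp.notMem_support_iff.2 hi⟩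
  obtain ⟨w', hw', hsupp', hdeg', hx', hindep'⟩ := ih _ (hn ▸ card_lt_card hssub) hnonneg rfl
  refine ⟨w', hw', hsupp'.trans hsub, hdeg'.trans ?_, hx'.trans ?_, hindep'⟩
  · rw [map_add, finsupp_degree_smul]
    exact add_le_of_nonpos_right (mul_nonpos_of_nonneg_of_nonpos hr hdeg)
  · simp [hcx]

theorem exists_finsupp_of_mem_convexHull_insert_zero {S : Set ι} {y : M}
    (hy : y ∈ convexHull ℝ (insert 0 (x '' S))) :
    ∃ w : ι →₀ ℝ, 0 ≤ w ∧ (w.support : Set ι) ⊆ S ∧ w.degree ≤ 1 ∧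
      Finsupp.linearCombination ℝ x w = y := by
  let W : Set (ι →₀ ℝ) := {w | 0 ≤ w ∧ w ∈ Finsupp.supported ℝ ℝ S ∧ w.degree ≤ 1}
  have hW : Convex ℝ W := by
    rintro w ⟨hw, hwS, hwdeg⟩ w' ⟨hw', hwS', hwdeg'⟩ a b ha hb hab
    refine ⟨add_nonneg (smul_nonneg ha hw) (smul_nonneg hb hw'),
      add_mem (Submodule.smul_mem _ a hwS) (Submodule.smul_mem _ b hwS'), ?_⟩
    rw [map_add, finsupp_degree_smul, finsupp_degree_smul]
    nlinarith
  have hsub : insert 0 (x '' S) ⊆ Finsupp.linearCombination ℝ x '' W := by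
    rintro _ (rfl | ⟨i, hi, rfl⟩)
    · exact ⟨0, ⟨le_rfl, zero_mem _, by simp⟩, map_zero _⟩
    · exact ⟨.single i 1, ⟨Finsupp.single_nonneg.2 zero_le_one,
        Finsupp.single_mem_supported ℝ 1 hi, by simp⟩, by simp⟩
  obtain ⟨w, ⟨hw, hwS, hwdeg⟩, hwy⟩ := convexHull_min hsub (hW.linear_image _) hy
  exact ⟨w, hw, hwS, hwdeg, hwy⟩

theorem exists_linearIndepOn_of_mem_convexHull_insert_zero {S : Set ι} {y : M}
    (hy : y ∈ convexHull ℝ (insert 0 (x '' S))) :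
    ∃ w : ι →₀ ℝ, 0 ≤ w ∧ (w.support : Set ι) ⊆ S ∧ w.degree ≤ 1 ∧
      Finsupp.linearCombination ℝ x w = y ∧ LinearIndepOn ℝ x w.support := by
  obtain ⟨w, hw, hS, hdeg, rfl⟩ := exists_finsupp_of_mem_convexHull_insert_zero hy
  obtain ⟨w', hw', hsupp, hdeg', hx, hindep⟩ := exists_nonneg_linearIndepOn_support (x := x) hw
  exact ⟨w', hw', (coe_subset.2 hsupp).trans hS, hdeg'.trans hdeg, hx, hindep⟩

end Caratheodory

section ConeMonoid

/-- The monoid over a set `A` of lattice points: the submonoid of `ℕ × M` generated by `{1} × A`.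
Its degree-`k` part consists of the sums of `k` elements of `A`. -/
def coneMonoid {M : Type*} [AddCommMonoid M] (A : Set M) : AddSubmonoid (ℕ × M) :=
  .closure (Prod.mk 1 '' A)

section AddCommMonoid

variable {M : Type*} [AddCommMonoid M] {A : Set M} {x : M}

theorem mk_one_mem_coneMonoid (hx : x ∈ A) : (1, x) ∈ coneMonoid A :=
  AddSubmonoid.subset_closure ⟨x, hx, rfl⟩

theorem mk_one_mem_coneMonoid_iff : (1, x) ∈ coneMonoid A ↔ x ∈ A := by
  refine ⟨fun hx => ?_, mk_one_mem_coneMonoid⟩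
  have hcases {z : ℕ × M} (hz : z ∈ coneMonoid A) : z = 0 ∨ z ∈ Prod.mk 1 '' A ∨ 2 ≤ z.1 := by
    induction hz using AddSubmonoid.closure_induction with
    | mem z hz => exact .inr (.inl hz)
    | zero => exact .inl rfl
    | add z z' _ _ hz hz' =>
      rcases hz with rfl | ⟨a, ha, rfl⟩ | hz
      · rwa [zero_add]
      · rcases hz' with rfl | ⟨a', -, rfl⟩ | hz'
        · exact .inr (.inl ⟨a, ha, (add_zero _).symm⟩)
        · exact .inr (.inr le_rfl)
        · exact .inr (.inr (hz'.trans le_add_self))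
      · exact .inr (.inr (hz.trans le_self_add))
  simpa using hcases hx

theorem coeff_one_hilbertSeries_coneMonoid (A : Set M) :
    PowerSeries.coeff 1 (hilbertSeries Prod.fst (coneMonoid A : Set (ℕ × M))) = A.ncard := by
  have hpiece : (coneMonoid A : Set (ℕ × M)) ∩ Prod.fst ⁻¹' {1} = Prod.mk 1 '' A := by
    ext ⟨k, x⟩
    constructor
    · rintro ⟨hx, rfl⟩
      exact ⟨x, mk_one_mem_coneMonoid_iff.1 hx, rfl⟩
    · rintro ⟨x, hx, ⟨⟩⟩
      exact ⟨mk_one_mem_coneMonoid hx, rfl⟩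
  rw [hilbertSeries, PowerSeries.coeff_mk, hpiece,
    Set.ncard_image_of_injective _ (Prod.mk_right_injective 1)]

theorem finite_coneMonoid_inter_preimage (hA : A.Finite) (k : ℕ) :
    ((coneMonoid A : Set (ℕ × M)) ∩ Prod.fst ⁻¹' {k}).Finite := by
  have := hA.fintype
  rw [coneMonoid, Set.image_eq_range]
  exact finite_closure_range_inter_preimage (AddMonoidHom.fst ℕ M) (fun _ => rfl) k

theorem coe_coneMonoid_insert (A : Set M) (x : M) :
    (coneMonoid (insert x A) : Set (ℕ × M)) =
      (coneMonoid A : Set (ℕ × M)) ∪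
        ((1, x) + ·) '' (coneMonoid (insert x A) : Set (ℕ × M)) := by
  refine Set.Subset.antisymm (fun z hz => ?_) (Set.union_subset ?_ ?_)
  · induction hz using AddSubmonoid.closure_induction_left with
    | zero => exact .inl (zero_mem _)
    | add_left z hz z' hz' ih =>
      obtain ⟨a, rfl | ha, rfl⟩ := hz
      · exact .inr ⟨z', hz', rfl⟩
      · obtain hz'' | ⟨y, hy, rfl⟩ := ih
        · exact .inl (add_mem (mk_one_mem_coneMonoid ha) hz'')
        · exact .inr ⟨(1, a) + y, add_mem (mk_one_mem_coneMonoid (.inr ha)) hy,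
            add_left_comm _ _ _⟩
  · exact AddSubmonoid.closure_mono (Set.image_mono (Set.subset_insert x A))
  · rintro _ ⟨z, hz, rfl⟩
    exact add_mem (mk_one_mem_coneMonoid (Set.mem_insert x A)) hz

end AddCommMonoid

variable {M : Type*} [AddCommGroup M] {A : Set M}

theorem hilbertSeries_coneMonoid_insert (hA : A.Finite) {x : M} (l : M →+ ℤ)
    (hlA : ∀ a ∈ A, l a = 0) (hlx : l x = 1) :
    hilbertSeries Prod.fst (coneMonoid (insert x A) : Set (ℕ × M)) =
      hilbertSeries Prod.fst (coneMonoid A : Set (ℕ × M)) +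
        PowerSeries.X * hilbertSeries Prod.fst (coneMonoid (insert x A) : Set (ℕ × M)) := by
  have hzero {z : ℕ × M} (hz : z ∈ coneMonoid A) : l z.2 = 0 := by
    induction hz using AddSubmonoid.closure_induction with
    | mem z hz => obtain ⟨a, ha, rfl⟩ := hz; exact hlA a ha
    | zero => exact map_zero l
    | add z z' _ _ hz hz' => rw [Prod.snd_add, map_add, hz, hz', add_zero]
  have hnonneg {z : ℕ × M} (hz : z ∈ coneMonoid (insert x A)) : 0 ≤ l z.2 := by
    induction hz using AddSubmonoid.closure_induction with
    | mem z hz => obtain ⟨a, rfl | ha, rfl⟩ := hz <;> simp [*]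
    | zero => exact (map_zero l).ge
    | add z z' _ _ hz hz' => rw [Prod.snd_add, map_add]; exact add_nonneg hz hz'
  have hdisj : Disjoint (coneMonoid A : Set (ℕ × M))
      (((1, x) + ·) '' (coneMonoid (insert x A) : Set (ℕ × M))) := by
    refine Set.disjoint_left.2 ?_
    rintro _ hz ⟨z, hz', rfl⟩
    have hl := hzero hz
    rw [Prod.snd_add, map_add, hlx] at hl
    linarith [hnonneg hz']
  have himage : hilbertSeries Prod.fst
      (((1, x) + ·) '' (coneMonoid (insert x A) : Set (ℕ × M))) =
        PowerSeries.X * hilbertSeries Prod.fst (coneMonoid (insert x A) : Set (ℕ × M)) :=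
    hilbertSeries_image_succ (add_right_injective _).injOn fun z _ => add_comm 1 z.1
  have hfinite (k : ℕ) := finite_coneMonoid_inter_preimage (hA.insert x) k
  have hsub := Set.subset_union_right.trans (coe_coneMonoid_insert A x).superset
  rw [← himage, ← hilbertSeries_union hdisj (finite_coneMonoid_inter_preimage hA) fun k =>
    (hfinite k).subset (Set.inter_subset_inter_left _ hsub), ← coe_coneMonoid_insert]

end ConeMonoid

section EhrhartSeries

variable {V E : Type*} [DecidableEq V] {t h : E → V} {S : Set E} {k : ℕ} {p : V → ℤ}

/-- The lattice points spanning `rootPolyOn t h S`: the origin and the edge vectors of `S`. -/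
def edgePoints (t h : E → V) (S : Set E) : Set (V → ℤ) :=
  insert 0 ((fun f => edgeVec ℤ (t f) (h f)) '' S)

theorem edgePoints_insert (t h : E → V) (e : E) (S : Set E) :
    edgePoints t h (insert e S) = insert (edgeVec ℤ (t e) (h e)) (edgePoints t h S) := by
  rw [edgePoints, edgePoints, Set.image_insert_eq, Set.insert_comm]

theorem edgeVec_mem_edgePoints_iff {e : E} :
    edgeVec ℤ (t e) (h e) ∈ edgePoints t h S ↔ t e = h e ∨ ∃ f ∈ S, t f = t e ∧ h f = h e := by
  by_cases hloop : t e = h e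
  · simp [edgePoints, edgeVec_eq_zero_iff, hloop]
  · simp [edgePoints, edgeVec_eq_zero_iff, hloop, eq_comm (b := edgeVec ℤ (t e) (h e)),
      edgeVec_eq_edgeVec_iff hloop, eq_comm (a := t e), eq_comm (a := h e)]

theorem finite_edgePoints [Finite V] (t h : E → V) (S : Set E) : (edgePoints t h S).Finite :=
  ((Set.finite_range fun uv : V × V => edgeVec ℤ uv.1 uv.2).subset
    (Set.image_subset_iff.2 fun f _ => ⟨(t f, h f), rfl⟩)).insert 0

theorem convex_rootPolyOn (t h : E → V) (S : Set E) : Convex ℝ (rootPolyOn t h S) :=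
  convex_convexHull ℝ _

theorem intCast_mem_rootPolyOn (hp : p ∈ edgePoints t h S) :
    (fun v => (p v : ℝ)) ∈ rootPolyOn t h S := by
  refine subset_convexHull ℝ _ ?_
  obtain rfl | ⟨f, hf, rfl⟩ := hp
  · exact .inl (funext fun _ => Int.cast_zero)
  · exact .inr ⟨f, hf, by rw [← edgeVec_eq_xvec, intCast_edgeVec]⟩

theorem exists_nat_combination_of_mem_smul_rootPolyOn [Finite V]
    (hp : (fun v => (p v : ℝ)) ∈ (k : ℝ) • rootPolyOn t h S) :
    ∃ (F : Finset E) (n : E → ℕ), (F : Set E) ⊆ S ∧ ∑ f ∈ F, n f ≤ k ∧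
      ∑ f ∈ F, n f • edgeVec ℤ (t f) (h f) = p := by
  obtain ⟨y, hy, hyp⟩ := hp
  rw [rootPolyOn, Set.singleton_union] at hy
  obtain ⟨w, hw, hwS, hdeg, rfl, hindep⟩ := exists_linearIndepOn_of_mem_convexHull_insert_zero hy
  have hindep' : LinearIndepOn ℝ (xvec t h) ((k : ℝ) • w).support :=
    hindep.mono (coe_subset.2 Finsupp.support_smul)
  have hnat (f : E) : ∃ n : ℕ, ((k : ℝ) • w) f = n := by
    obtain ⟨n, hn⟩ := exists_int_eq_of_linearIndepOn_support hindep' ((map_smul _ _ _).trans hyp) f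
    have hn0 : (0 : ℝ) ≤ n := hn.symm.trans_ge (mul_nonneg k.cast_nonneg (hw f))
    lift n to ℕ using Int.cast_nonneg_iff.1 hn0
    exact ⟨n, hn⟩
  choose n hn using hnat
  refine ⟨w.support, n, hwS, ?_, funext fun v => ?_⟩
  · have hsum : ((∑ f ∈ w.support, n f : ℕ) : ℝ) = k * w.degree := by
      simp [Finsupp.degree_apply, mul_sum, ← hn]
    exact_mod_cast hsum.trans_le (mul_le_of_le_one_right k.cast_nonneg hdeg)
  · have hcast := congrFun hyp v
    simp only [Finsupp.linearCombination_apply, Finsupp.sum, ← edgeVec_eq_xvec, ← intCast_edgeVec,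
      Pi.smul_apply, Finset.sum_apply, smul_eq_mul, mul_sum, ← mul_assoc] at hcast
    simp only [Finsupp.smul_apply, smul_eq_mul] at hn
    simp only [hn] at hcast
    rw [Finset.sum_apply]
    simp only [Pi.smul_apply]
    exact_mod_cast hcast

theorem mem_smul_rootPolyOn_iff [Finite V] :
    (fun v => (p v : ℝ)) ∈ (k : ℝ) • rootPolyOn t h S ↔ (k, p) ∈ coneMonoid (edgePoints t h S) := by
  constructor
  · intro hp
    obtain ⟨F, n, hF, hn, rfl⟩ := exists_nat_combination_of_mem_smul_rootPolyOn hp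
    obtain ⟨r, rfl⟩ := Nat.exists_eq_add_of_le hn
    have hsplit : (∑ f ∈ F, n f + r, ∑ f ∈ F, n f • edgeVec ℤ (t f) (h f)) =
        ∑ f ∈ F, n f • (1, edgeVec ℤ (t f) (h f)) + r • (1, 0) := by
      ext <;> simp [Prod.fst_sum, Prod.snd_sum]
    rw [hsplit]
    exact add_mem
      (sum_mem fun f hf => nsmul_mem (mk_one_mem_coneMonoid (.inr ⟨f, hF hf, rfl⟩)) (n f))
      (nsmul_mem (mk_one_mem_coneMonoid (.inl rfl)) r)
  · suffices hmem : ∀ z ∈ coneMonoid (edgePoints t h S),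
        (fun v => (z.2 v : ℝ)) ∈ (z.1 : ℝ) • rootPolyOn t h S from hmem (k, p)
    intro z hz
    induction hz using AddSubmonoid.closure_induction with
    | mem z hz =>
      obtain ⟨y, hy, rfl⟩ := hz
      simpa using intCast_mem_rootPolyOn hy
    | zero => exact ⟨0, subset_convexHull ℝ _ (.inl rfl), by ext; simp⟩
    | add z z' _ _ hz hz' =>
      have hsum := Set.add_mem_add hz hz'
      rw [← (convex_rootPolyOn t h S).add_smul z.1.cast_nonneg z'.1.cast_nonneg] at hsum
      rw [Prod.fst_add, Nat.cast_add]
      convert hsum using 1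
      ext v
      simp

theorem ehrSeries_rootPolyOn [Fintype V] (t h : E → V) (S : Set E) :
    ehrSeries (rootPolyOn t h S) =
      hilbertSeries Prod.fst (coneMonoid (edgePoints t h S) : Set (ℕ × (V → ℤ))) := by
  ext k
  have hpiece : (coneMonoid (edgePoints t h S) : Set (ℕ × (V → ℤ))) ∩ Prod.fst ⁻¹' {k} =
      Prod.mk k '' {p : V → ℤ | (fun v => (p v : ℝ)) ∈ (k : ℝ) • rootPolyOn t h S} := by
    ext ⟨j, p⟩
    constructor
    · rintro ⟨hp, rfl⟩
      exact ⟨p, mem_smul_rootPolyOn_iff.2 hp, rfl⟩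
    · rintro ⟨p, hp, ⟨⟩⟩
      exact ⟨mem_smul_rootPolyOn_iff.1 hp, rfl⟩
  rw [ehrSeries, hilbertSeries, PowerSeries.coeff_mk, PowerSeries.coeff_mk, hpiece,
    Set.ncard_image_of_injective _ (Prod.mk_right_injective k)]
  rfl

theorem exists_isHStar_rootPolyOn [Fintype V] (t h : E → V) (S : Set E) :
    ∃ q : Polynomial ℤ, IsHStar (rootPolyOn t h S) q := by
  have := (finite_edgePoints t h S).fintype
  obtain ⟨q, hq⟩ := exists_polynomial_eq_hilbertSeries_closure
    (AddMonoidHom.fst ℕ (V → ℤ)) (v := fun y : edgePoints t h S => ((1 : ℕ), (y : V → ℤ)))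
    (fun _ => rfl) (d := pdim (rootPolyOn t h S) + 1) fun F hF => by
      simpa using card_le_pdim_add_one hF.linearIndependent fun y => intCast_mem_rootPolyOn y.1.2
  refine ⟨q, ?_⟩
  rw [IsHStar, ehrSeries_rootPolyOn, coneMonoid, Set.image_eq_range]
  exact hq.symm

theorem vectorSpan_rootPolyOn (t h : E → V) (S : Set E) :
    vectorSpan ℝ (rootPolyOn t h S) = Submodule.span ℝ (xvec t h '' S) := by
  rw [rootPolyOn, Set.singleton_union, ← direction_affineSpan, affineSpan_convexHull,
    direction_affineSpan, vectorSpan_eq_span_vsub_set_right ℝ (Set.mem_insert 0 _)]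
  simp

end EhrhartSeries

section EdgeDeletion

theorem forall_isHStar_eq_iff {ι : Type*} [Fintype ι] {P Q : Set (ι → ℝ)}
    (hP : ∃ p, IsHStar P p) (hQ : ∃ q, IsHStar Q q) :
    (∀ p q, IsHStar P p → IsHStar Q q → p = q) ↔
      (1 - PowerSeries.X) ^ (pdim P + 1) * ehrSeries P =
        (1 - PowerSeries.X) ^ (pdim Q + 1) * ehrSeries Q := by
  obtain ⟨p, hp⟩ := hP
  obtain ⟨q, hq⟩ := hQ
  refine ⟨fun heq => ?_, fun heq p q hp hq => ?_⟩
  · obtain rfl := heq p q hp hq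
    exact hp.trans hq.symm
  · exact Polynomial.coe_injective ℤ (hp.symm.trans (heq.trans hq))

variable {V E : Type*} [DecidableEq V] {t h : E → V} {S : Set E} {e : E}

theorem pdim_insert_of_xvec_notMem_span [Finite V]
    (he : xvec t h e ∉ Submodule.span ℝ (xvec t h '' S)) :
    pdim (rootPolyOn t h (insert e S)) = pdim (rootPolyOn t h S) + 1 := by
  rw [pdim, pdim, vectorSpan_rootPolyOn, vectorSpan_rootPolyOn, Set.image_insert_eq,
    Submodule.span_insert, sup_comm, Submodule.finrank_sup_span_singleton he]

theorem pdim_insert_of_xvec_mem_span (he : xvec t h e ∈ Submodule.span ℝ (xvec t h '' S)) :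
    pdim (rootPolyOn t h (insert e S)) = pdim (rootPolyOn t h S) := by
  rw [pdim, pdim, vectorSpan_rootPolyOn, vectorSpan_rootPolyOn, Set.image_insert_eq,
    Submodule.span_insert_eq_span he]

variable [Fintype V]

theorem ehrSeries_insert_of_xvec_notMem_span
    (he : xvec t h e ∉ Submodule.span ℝ (xvec t h '' S)) :
    ehrSeries (rootPolyOn t h S) =
      (1 - PowerSeries.X) * ehrSeries (rootPolyOn t h (insert e S)) := by
  rw [← edgeVec_eq_xvec, edgeVec_mem_span_iff_reachable] at he
  obtain ⟨C, ht, hh, hC⟩ := exists_cut_of_not_reachable he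
  have hzero : ∀ y ∈ edgePoints t h S, cutForm ℤ C y = 0 := by
    rintro _ (rfl | ⟨f, hf, rfl⟩)
    · exact map_zero _
    · simp [cutForm_edgeVec, hC f hf]
  have hone : cutForm ℤ C (edgeVec ℤ (t e) (h e)) = 1 := by
    simp [cutForm_edgeVec, ht, hh]
  rw [ehrSeries_rootPolyOn, ehrSeries_rootPolyOn, edgePoints_insert]
  linear_combination -hilbertSeries_coneMonoid_insert (finite_edgePoints t h S)
    (cutForm ℤ C).toAddMonoidHom hzero hone

theorem ehrSeries_insert_eq_iff :
    ehrSeries (rootPolyOn t h (insert e S)) = ehrSeries (rootPolyOn t h S) ↔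
      edgeVec ℤ (t e) (h e) ∈ edgePoints t h S := by
  rw [ehrSeries_rootPolyOn, ehrSeries_rootPolyOn, edgePoints_insert]
  refine ⟨fun heq => ?_, fun hmem => by rw [Set.insert_eq_of_mem hmem]⟩
  have hcard := congrArg (PowerSeries.coeff 1) heq
  rw [coeff_one_hilbertSeries_coneMonoid, coeff_one_hilbertSeries_coneMonoid, Nat.cast_inj] at hcard
  by_contra hmem
  rw [Set.ncard_insert_of_notMem hmem (finite_edgePoints t h S)] at hcard
  lia

theorem forall_isHStar_insert_eq_iff :
    (∀ p q, IsHStar (rootPolyOn t h (insert e S)) p → IsHStar (rootPolyOn t h S) q → p = q) ↔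
      xvec t h e ∉ Submodule.span ℝ (xvec t h '' S) ∨
        edgeVec ℤ (t e) (h e) ∈ edgePoints t h S := by
  rw [forall_isHStar_eq_iff (exists_isHStar_rootPolyOn t h _) (exists_isHStar_rootPolyOn t h S)]
  by_cases he : xvec t h e ∈ Submodule.span ℝ (xvec t h '' S)
  · have hpow : (1 - PowerSeries.X : PowerSeries ℤ) ^ (pdim (rootPolyOn t h S) + 1) ≠ 0 :=
      pow_ne_zero _ (sub_ne_zero.2 PowerSeries.X_prime.ne_one.symm)
    rw [pdim_insert_of_xvec_mem_span he, mul_right_inj' hpow, ehrSeries_insert_eq_iff]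
    exact (or_iff_right (not_not.2 he)).symm
  · rw [pdim_insert_of_xvec_notMem_span he, ehrSeries_insert_of_xvec_notMem_span he]
    exact iff_of_true (by ring) (.inl he)

end EdgeDeletion

theorem stmt17_general {V E : Type*} [Fintype V] [DecidableEq V]
    (t h : E → V) (hconn : (underlyingOn t h Set.univ).Connected) (e : E) :
    (∀ p q : Polynomial ℤ,
      IsHStar (rootPolyOn t h Set.univ) p →
      IsHStar (rootPolyOn t h {f | f ≠ e}) q → p = q) ↔
    (t e = h e ∨ ¬(underlyingOn t h {f | f ≠ e}).Connected ∨
      ∃ f, f ≠ e ∧ t f = t e ∧ h f = h e) := by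
  have huniv : insert e {f | f ≠ e} = Set.univ := by
    ext f
    simp [em]
  rw [← huniv] at hconn
  rw [← huniv, forall_isHStar_insert_eq_iff, ← connected_iff_xvec_mem_span hconn,
    edgeVec_mem_edgePoints_iff]
  exact or_left_comm

/-- for a weakly connected digraph `D`, the `h^*`-polynomials of
`Q̃_D` and `Q̃_{D-e}` coincide if and only if `e` is a loop, a bridge, or has a
parallel edge (same tail and head). -/
theorem stmt17 {V E : Type*} [Fintype V] [Fintype E] [DecidableEq V]
    (t h : E → V) (hconn : (underlyingOn t h Set.univ).Connected) (e : E) :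
    (∀ p q : Polynomial ℤ,
      IsHStar (rootPolyOn t h Set.univ) p →
      IsHStar (rootPolyOn t h {f | f ≠ e}) q → p = q) ↔
    (t e = h e ∨ ¬(underlyingOn t h {f | f ≠ e}).Connected ∨
      ∃ f, f ≠ e ∧ t f = t e ∧ h f = h e) :=
  stmt17_general t h hconn e
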